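/- arXiv:2304.00273 — 3 statements merged into one kernel-verified Lean document; each statement's English description precedes it below -/
import Mathlib

section
/- Let Z = Z₀ ⊕ Z₁ be an n-dimensional null-filiform Zinbiel superalgebra over ℂ with Z₁ ≠ 0. Then either dim Z₁ = dim Z₀ or dim Z₁ = dim Z₀ + 1, and Z has a basis e₁, …, e_n with e_t ∈ Z₁ for t odd and e_t ∈ Z₀ for t even, whose multiplication is given (with the convention e_t = 0 whenever t > n) by: e_{2k+1}·e_{2l} = C(k+l, k) e_{2k+2l+1}; e_{2k}·e_{2l} = C(k+l−1, l) e_{2k+2l} for k, l ≥ 1; e_{2k+1}·e_{2l+1} = C(k+l, l) e_{2k+2l+2}; and e_{2k}·e_{2l+1} = 0. In particular, such a superalgebra is unique up to isomorphism for each pair (dim Z₀, dim Z₁). -/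
open Module Submodule

/-- A Zinbiel superalgebra over a field `K`: a `K`-vector space `Z` with a bilinear
multiplication and a direct sum decomposition `Z = Z₀ ⊕ Z₁` such that
`Zᵢ·Zⱼ ⊆ Z_{i+j (mod 2)}` and, for all homogeneous `x, y, z`,
`(x·y)·z = x·(y·z + (−1)^{|y||z|} z·y)`. -/
structure ZinbielSuper (K : Type*) [Field K] (Z : Type*) [AddCommGroup Z] [Module K Z] where
  mul : Z →ₗ[K] Z →ₗ[K] Z
  Z0 : Submodule K Z
  Z1 : Submodule K Z
  compl : IsCompl Z0 Z1
  mul00 : ∀ x ∈ Z0, ∀ y ∈ Z0, mul x y ∈ Z0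
  mul01 : ∀ x ∈ Z0, ∀ y ∈ Z1, mul x y ∈ Z1
  mul10 : ∀ x ∈ Z1, ∀ y ∈ Z0, mul x y ∈ Z1
  mul11 : ∀ x ∈ Z1, ∀ y ∈ Z1, mul x y ∈ Z0
  zinb_even : ∀ x y z : Z, (x ∈ Z0 ∨ x ∈ Z1) → (y ∈ Z0 ∨ y ∈ Z1) → (z ∈ Z0 ∨ z ∈ Z1) →
    (y ∈ Z0 ∨ z ∈ Z0) → mul (mul x y) z = mul x (mul y z + mul z y)
  zinb_odd : ∀ x y z : Z, (x ∈ Z0 ∨ x ∈ Z1) → y ∈ Z1 → z ∈ Z1 →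
    mul (mul x y) z = mul x (mul y z - mul z y)

variable {K : Type*} [Field K] {Z : Type*} [AddCommGroup Z] [Module K Z]

/-- The linear span of all products `a·b` with `a ∈ A`, `b ∈ B`. -/
def mulSub (mul : Z →ₗ[K] Z →ₗ[K] Z) (A B : Submodule K Z) : Submodule K Z :=
  Submodule.span K {z : Z | ∃ a ∈ A, ∃ b ∈ B, mul a b = z}

/-- `lcs S k = Z^k` for `k ≥ 1`: `Z¹ = Z`, `Z^{k+1} = Z·Z^k`. (`lcs S 0 = ⊤` by convention.) -/
def lcs (S : ZinbielSuper K Z) : ℕ → Submodule K Z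
  | 0 => ⊤
  | 1 => ⊤
  | (k+2) => mulSub S.mul ⊤ (lcs S (k+1))

/-- An `n`-dimensional Zinbiel superalgebra is null-filiform if `dim Z^i = n + 1 − i`
for `1 ≤ i ≤ n + 1`. -/
def NullFiliform (S : ZinbielSuper K Z) : Prop :=
  ∀ i : ℕ, 1 ≤ i → i ≤ finrank K Z + 1 →
    finrank K (lcs S i) = finrank K Z + 1 - i

/-- From a basis `b` indexed by `Fin n`, the family `e₁, …, e_n` (indexed by `1 ≤ t ≤ n`),
with the convention that out-of-range indices give `0`. -/
noncomputable def tB {n : ℕ} (b : Basis (Fin n) K Z) : ℕ → Z :=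
  fun t => if h : 1 ≤ t ∧ t ≤ n then b ⟨t - 1, by omega⟩ else 0

universe u v

/-!
Let `σ` be the parity involution, an automorphism preserving every `Z^k`. The super-Zinbiel identity
`(x·y)·z = x·(y·z ± z·y)` then gives `Z^k·Z ⊆ Z^{k+1}` by induction on `k`, so a subalgebra `P` with
`P + Z² = Z` satisfies `P + Z^k = Z` for all `k`; as `Z` is nilpotent, `P = Z`. Applied to `P = Z₀`,
this shows that some odd `x` lies outside `Z²`, and since `Z²` has codimension one, that `Z` is
spanned by the left powers `e_t = x·(x·(⋯·x))`. Their products are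
`e_s·e_t = [s+t-1, t]_{-1} e_{s+t}` with Gaussian binomial coefficients at `q = -1`, because these
satisfy the Pascal rule `[s+t, t] = [s+t-1, t] + (-1)^{st} [s+t-1, s]`, which the super-Zinbiel
identity imposes on the structure constants. The dimensions follow from `Z₀ = x·Z₁` and
`Z₁ = K x + x·Z₀`.
-/

lemma eq_left_of_isCompl_of_codisjoint {α : Type*} [Lattice α] [BoundedOrder α]
    [IsModularLattice α] {a b c d : α} (h : IsCompl c d) (hac : a ≤ c) (hbd : b ≤ d)
    (hab : Codisjoint a b) : a = c :=
  eq_of_le_of_inf_le_of_le_sup hac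
    ((h.disjoint.mono_right hbd).eq_bot.trans_le bot_le) (le_top.trans hab.eq_top.ge)

/-- The Gaussian binomial coefficient `[n, k]_q` at `q = -1`, given by its closed form. These are
the structure constants of null-filiform Zinbiel superalgebras. -/
def negOneChoose (n k : ℕ) : ℕ :=
  if Even n ∧ Odd k then 0 else (n / 2).choose (k / 2)

lemma negOneChoose_two_mul_right (n k : ℕ) : negOneChoose n (2 * k) = (n / 2).choose k := by
  simp [negOneChoose]

lemma negOneChoose_even_odd (n k : ℕ) : negOneChoose (2 * n) (2 * k + 1) = 0 := by
  simp [negOneChoose]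

lemma negOneChoose_odd_odd (n k : ℕ) : negOneChoose (2 * n + 1) (2 * k + 1) = n.choose k := by
  simp [negOneChoose, Nat.mul_add_div]

lemma negOneChoose_self (n : ℕ) : negOneChoose n n = 1 := by
  have h : ¬(Even n ∧ Odd n) := fun h => Nat.not_even_iff_odd.2 h.2 h.1
  rw [negOneChoose, if_neg h, Nat.choose_self]

/-- The `q`-Pascal rule at `q = -1` has the sign `(-1) ^ a` instead. The two agree since
`negOneChoose n a = 0` when `a` is odd and `b` is even. -/
lemma negOneChoose_succ {a b n : ℕ} (h : a + b = n + 1) :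
    (negOneChoose (n + 1) b : ℤ) =
      negOneChoose n b + (-1) ^ (a * b) * negOneChoose n a := by
  obtain ⟨k, rfl | rfl⟩ := Nat.even_or_odd' a <;> obtain ⟨l, rfl | rfl⟩ := Nat.even_or_odd' b
  · obtain ⟨m, rfl⟩ : ∃ m, n = 2 * m + 1 := ⟨k + l - 1, by omega⟩
    have pascal : (m + 1).choose l = m.choose l + m.choose k := by
      cases l with
      | zero => simp [Nat.choose_eq_zero_of_lt (show m < k by omega)]
      | succ l =>
        rw [Nat.choose_succ_succ', add_comm, Nat.choose_symm_of_eq_add (show m = l + k by omega)]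
    have half : (2 * m + 1) / 2 = m := by omega
    have half_succ : (2 * m + 1 + 1) / 2 = m + 1 := by omega
    simp [negOneChoose_two_mul_right, half, half_succ, pascal, mul_assoc]
  · obtain rfl : n = 2 * (k + l) := by omega
    have symm : (k + l).choose l = (k + l).choose k := Nat.choose_symm_add.symm
    simp [negOneChoose_two_mul_right, negOneChoose_even_odd, negOneChoose_odd_odd, symm, mul_assoc]
  · obtain rfl : n = 2 * (k + l) := by omega
    have half : (2 * (k + l) + 1) / 2 = k + l := by omega
    simp [negOneChoose_two_mul_right, negOneChoose_even_odd, half]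
  · obtain rfl : n = 2 * (k + l) + 1 := by omega
    have symm : (k + l).choose l = (k + l).choose k := Nat.choose_symm_add.symm
    have sign : (-1 : ℤ) ^ ((2 * k + 1) * (2 * l + 1)) = -1 :=
      (odd_two_mul_add_one k |>.mul (odd_two_mul_add_one l)).neg_one_pow
    rw [show 2 * (k + l) + 1 + 1 = 2 * (k + l + 1) by ring, negOneChoose_even_odd,
      negOneChoose_odd_odd, negOneChoose_odd_odd, symm, sign]
    ring

lemma mulSub_eq_map₂ (f : Z →ₗ[K] Z →ₗ[K] Z) (A B : Submodule K Z) :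
    mulSub f A B = Submodule.map₂ f A B :=
  (Submodule.map₂_eq_span_image2 f A B).symm

lemma tB_succ {n : ℕ} (b : Basis (Fin n) K Z) (i : Fin n) : tB b (i + 1) = b i := by
  simp [tB]

lemma tB_of_lt {n : ℕ} (b : Basis (Fin n) K Z) {t : ℕ} (h : n < t) : tB b t = 0 :=
  dif_neg fun h' => by omega

lemma map_tB {Z' : Type*} [AddCommGroup Z'] [Module K Z'] {n : ℕ} {b : Basis (Fin n) K Z}
    {b' : Basis (Fin n) K Z'} {φ : Z →ₗ[K] Z'} (h : ∀ i, φ (b i) = b' i) (t : ℕ) :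
    φ (tB b t) = tB b' t := by
  unfold tB
  split_ifs with ht
  · exact h _
  · exact map_zero φ

namespace ZinbielSuper

section Parity

/-- The homogeneous component of the parity of `t`, indexed by `ℕ` so that the sign rule can be
written with exponents. -/
def part (S : ZinbielSuper K Z) (t : ℕ) : Submodule K Z :=
  if Even t then S.Z0 else S.Z1

variable (S : ZinbielSuper K Z)

lemma part_of_even {t : ℕ} (h : Even t) : S.part t = S.Z0 := if_pos h

lemma part_of_odd {t : ℕ} (h : Odd t) : S.part t = S.Z1 := if_neg (Nat.not_even_iff_odd.2 h)

lemma homogeneous_induction {p : Z → Prop} (homogeneous : ∀ x, x ∈ S.Z0 ∨ x ∈ S.Z1 → p x)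
    (add : ∀ x y, p x → p y → p (x + y)) (z : Z) : p z := by
  obtain ⟨x, y, hx, hy, rfl⟩ := Submodule.codisjoint_iff_exists_add_eq.1 S.compl.codisjoint z
  exact add x y (homogeneous x (.inl hx)) (homogeneous y (.inr hy))

/-- The involution `x₀ + x₁ ↦ x₀ - x₁`. It expresses the super-Zinbiel identity for an element `y`
that is not homogeneous. -/
noncomputable def parity : Z →ₗ[K] Z :=
  LinearMap.ofIsCompl S.compl S.Z0.subtype (-S.Z1.subtype)

variable {S}

lemma parity_of_mem_Z0 {x : Z} (hx : x ∈ S.Z0) : S.parity x = x :=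
  LinearMap.ofIsCompl_apply_left S.compl ⟨x, hx⟩

lemma parity_of_mem_Z1 {x : Z} (hx : x ∈ S.Z1) : S.parity x = -x :=
  LinearMap.ofIsCompl_apply_right S.compl ⟨x, hx⟩

lemma parity_of_mem_part {t : ℕ} {x : Z} (hx : x ∈ S.part t) :
    S.parity x = (-1 : K) ^ t • x := by
  rcases Nat.even_or_odd t with h | h
  · rw [S.part_of_even h] at hx
    rw [parity_of_mem_Z0 hx, h.neg_one_pow, one_smul]
  · rw [S.part_of_odd h] at hx
    rw [parity_of_mem_Z1 hx, h.neg_one_pow, neg_one_smul]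

lemma parity_mul (x y : Z) : S.parity (S.mul x y) = S.mul (S.parity x) (S.parity y) := by
  induction x using S.homogeneous_induction with
  | add x x' hx hx' => simp only [map_add, LinearMap.add_apply, hx, hx']
  | homogeneous x hx =>
    induction y using S.homogeneous_induction with
    | add y y' hy hy' => simp only [map_add, hy, hy']
    | homogeneous y hy =>
      rcases hx with hx | hx <;> rcases hy with hy | hy
      · simp [parity_of_mem_Z0, hx, hy, S.mul00 x hx y hy]
      · simp [parity_of_mem_Z0, parity_of_mem_Z1, hx, hy, S.mul01 x hx y hy]
      · simp [parity_of_mem_Z0, parity_of_mem_Z1, hx, hy, S.mul10 x hx y hy]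
      · simp [parity_of_mem_Z0, parity_of_mem_Z1, hx, hy, S.mul11 x hx y hy]

lemma mul_mul_of_mem_Z0 (x y : Z) {z : Z} (hz : z ∈ S.Z0) :
    S.mul (S.mul x y) z = S.mul x (S.mul y z + S.mul z y) := by
  induction x using S.homogeneous_induction with
  | add x x' hx hx' =>
    simp only [map_add, LinearMap.add_apply] at hx hx' ⊢
    rw [hx, hx']
    abel
  | homogeneous x hx =>
    induction y using S.homogeneous_induction with
    | add y y' hy hy' =>
      simp only [map_add, LinearMap.add_apply] at hy hy' ⊢
      rw [hy, hy']
      abel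
    | homogeneous y hy => exact S.zinb_even x y z hx hy (.inl hz) (.inr hz)

lemma mul_mul_of_mem_Z1 (x y : Z) {z : Z} (hz : z ∈ S.Z1) :
    S.mul (S.mul x y) z = S.mul x (S.mul y z + S.mul z (S.parity y)) := by
  induction x using S.homogeneous_induction with
  | add x x' hx hx' =>
    simp only [map_add, LinearMap.add_apply] at hx hx' ⊢
    rw [hx, hx']
    abel
  | homogeneous x hx =>
    induction y using S.homogeneous_induction with
    | add y y' hy hy' =>
      simp only [map_add, LinearMap.add_apply] at hy hy' ⊢
      rw [hy, hy']
      abel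
    | homogeneous y hy =>
      rcases hy with hy | hy
      · rw [parity_of_mem_Z0 hy, S.zinb_even x y z hx (.inl hy) (.inr hz) (.inl hy)]
      · rw [parity_of_mem_Z1 hy, map_neg, ← sub_eq_add_neg, S.zinb_odd x y z hx hy hz]

lemma mul_mul_of_mem_part (x : Z) {s t : ℕ} {y z : Z} (hy : y ∈ S.part s) (hz : z ∈ S.part t) :
    S.mul (S.mul x y) z = S.mul x (S.mul y z + (-1 : K) ^ (s * t) • S.mul z y) := by
  rcases Nat.even_or_odd t with h | h
  · rw [S.part_of_even h] at hz
    rw [mul_mul_of_mem_Z0 x y hz, (h.mul_left s).neg_one_pow, one_smul]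
  · rw [S.part_of_odd h] at hz
    rw [mul_mul_of_mem_Z1 x y hz, parity_of_mem_part hy, map_smul, mul_comm s, pow_mul,
      h.neg_one_pow]

end Parity

section LowerCentralSeries

variable {S : ZinbielSuper K Z}

lemma lcs_add_two_le_iff {k : ℕ} {A : Submodule K Z} :
    lcs S (k + 2) ≤ A ↔ ∀ x, ∀ y ∈ lcs S (k + 1), S.mul x y ∈ A := by
  simp [lcs, mulSub_eq_map₂, Submodule.map₂_le]

lemma mul_mem_lcs_of_right_mem {k : ℕ} (x : Z) {y : Z} (hy : y ∈ lcs S (k + 1)) :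
    S.mul x y ∈ lcs S (k + 2) :=
  lcs_add_two_le_iff.1 le_rfl x y hy

lemma parity_mem_lcs {k : ℕ} {x : Z} (hx : x ∈ lcs S (k + 1)) : S.parity x ∈ lcs S (k + 1) := by
  suffices h : lcs S (k + 1) ≤ (lcs S (k + 1)).comap S.parity from h hx
  clear hx
  induction k with
  | zero => exact fun _ _ => Submodule.mem_top
  | succ k ih =>
    refine lcs_add_two_le_iff.2 fun x y hy => ?_
    rw [Submodule.mem_comap, parity_mul]
    exact mul_mem_lcs_of_right_mem _ (ih hy)

lemma mul_mem_lcs_of_left_mem {k : ℕ} {x : Z} (hx : x ∈ lcs S (k + 1)) (y : Z) :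
    S.mul x y ∈ lcs S (k + 2) := by
  induction k generalizing x y with
  | zero => exact mul_mem_lcs_of_right_mem x Submodule.mem_top
  | succ k ih =>
    suffices h : lcs S (k + 2) ≤ (lcs S (k + 3)).comap (S.mul.flip y) from h hx
    refine lcs_add_two_le_iff.2 fun u v hv => ?_
    rw [Submodule.mem_comap, LinearMap.flip_apply]
    induction y using S.homogeneous_induction with
    | add y y' hy hy' => rw [map_add]; exact add_mem hy hy'
    | homogeneous y hy =>
      rcases hy with hy | hy
      · rw [mul_mul_of_mem_Z0 u v hy]
        exact mul_mem_lcs_of_right_mem u (add_mem (ih hv y) (mul_mem_lcs_of_right_mem y hv))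
      · rw [mul_mul_of_mem_Z1 u v hy]
        exact mul_mem_lcs_of_right_mem u
          (add_mem (ih hv y) (mul_mem_lcs_of_right_mem y (parity_mem_lcs hv)))

lemma sup_lcs_eq_top {P : Submodule K Z} (hmul : ∀ x ∈ P, ∀ y ∈ P, S.mul x y ∈ P)
    (hP : P ⊔ lcs S 2 = ⊤) (k : ℕ) : P ⊔ lcs S (k + 1) = ⊤ := by
  induction k with
  | zero => exact sup_top_eq P
  | succ k ih =>
    have decompose (z : Z) : ∃ p ∈ P, ∃ u ∈ lcs S (k + 1), p + u = z :=
      Submodule.mem_sup.1 (ih ▸ Submodule.mem_top)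
    suffices h : lcs S 2 ≤ P ⊔ lcs S (k + 2) from
      top_le_iff.1 (hP.symm.trans_le (sup_le le_sup_left h))
    refine lcs_add_two_le_iff.2 fun x y _ => ?_
    obtain ⟨p, hp, u, hu, rfl⟩ := decompose x
    obtain ⟨q, hq, v, hv, rfl⟩ := decompose y
    have expand : S.mul (p + u) (q + v) = S.mul p q + (S.mul p v + S.mul u (q + v)) := by
      simp only [map_add, LinearMap.add_apply]
      abel
    rw [expand]
    exact Submodule.add_mem_sup (hmul p hp q hq)
      (add_mem (mul_mem_lcs_of_right_mem p hv) (mul_mem_lcs_of_left_mem hu _))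

lemma eq_top_of_sup_lcs_two_eq_top {P : Submodule K Z} {k : ℕ} (hnil : lcs S (k + 1) = ⊥)
    (hmul : ∀ x ∈ P, ∀ y ∈ P, S.mul x y ∈ P) (hP : P ⊔ lcs S 2 = ⊤) : P = ⊤ := by
  simpa [hnil] using sup_lcs_eq_top hmul hP k

lemma not_Z1_le_lcs_two {k : ℕ} (hnil : lcs S (k + 1) = ⊥) (h1 : S.Z1 ≠ ⊥) :
    ¬S.Z1 ≤ lcs S 2 := by
  intro hle
  have sup_eq_top : S.Z0 ⊔ lcs S 2 = ⊤ := (S.compl.codisjoint.mono_right hle).eq_top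
  have Z0_eq_top : S.Z0 = ⊤ := eq_top_of_sup_lcs_two_eq_top hnil S.mul00 sup_eq_top
  exact h1 (top_disjoint.1 (Z0_eq_top ▸ S.compl.disjoint))

end LowerCentralSeries

section LeftPower

/-- The left power `e_t = x·(x·(⋯·x))` with `t` factors. The value `0` at `t = 0` matches the
convention of `tB`. -/
def leftPow (S : ZinbielSuper K Z) (x : Z) : ℕ → Z
  | 0 => 0
  | 1 => x
  | t + 2 => S.mul x (S.leftPow x (t + 1))

variable {S : ZinbielSuper K Z} {x : Z}

lemma leftPow_mem_lcs (t : ℕ) : S.leftPow x (t + 1) ∈ lcs S (t + 1) := by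
  induction t with
  | zero => exact Submodule.mem_top
  | succ t ih => exact mul_mem_lcs_of_right_mem x ih

lemma leftPow_eq_zero_of_lt {n t : ℕ} (hnil : lcs S (n + 1) = ⊥) (h : n < t) :
    S.leftPow x t = 0 := by
  induction t, h using Nat.le_induction with
  | base => exact (Submodule.mem_bot K).1 (hnil ▸ leftPow_mem_lcs n)
  | succ t h ih =>
    obtain ⟨t, rfl⟩ := Nat.exists_eq_add_of_lt h
    exact (congrArg (S.mul x) ih).trans (map_zero _)

lemma leftPow_mem_part (hx : x ∈ S.Z1) (t : ℕ) : S.leftPow x t ∈ S.part t := by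
  have pair (k : ℕ) : S.leftPow x (2 * k) ∈ S.Z0 ∧ S.leftPow x (2 * k + 1) ∈ S.Z1 := by
    induction k with
    | zero => exact ⟨zero_mem _, hx⟩
    | succ k ih =>
      have even_mem : S.leftPow x (2 * (k + 1)) ∈ S.Z0 := S.mul11 x hx _ ih.2
      exact ⟨even_mem, S.mul10 x hx _ even_mem⟩
  obtain ⟨k, rfl | rfl⟩ := Nat.even_or_odd' t
  · exact S.part_of_even (even_two_mul k) ▸ (pair k).1
  · exact S.part_of_odd (odd_two_mul_add_one k) ▸ (pair k).2

lemma leftPow_mem_Z0 (hx : x ∈ S.Z1) {t : ℕ} (h : Even t) : S.leftPow x t ∈ S.Z0 :=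
  S.part_of_even h ▸ leftPow_mem_part hx t

lemma leftPow_mem_Z1 (hx : x ∈ S.Z1) {t : ℕ} (h : Odd t) : S.leftPow x t ∈ S.Z1 :=
  S.part_of_odd h ▸ leftPow_mem_part hx t

lemma mul_leftPow (hx : x ∈ S.Z1) {s t n : ℕ} (hs : 0 < s) (ht : 0 < t) (h : s + t = n + 1) :
    S.mul (S.leftPow x s) (S.leftPow x t) =
      (negOneChoose n t : K) • S.leftPow x (n + 1) := by
  induction n generalizing s t with
  | zero => omega
  | succ n ih =>
    obtain _ | _ | s := s
    · exact absurd hs (lt_irrefl 0)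
    · obtain rfl : t = n + 1 := by omega
      rw [negOneChoose_self, Nat.cast_one, one_smul]
      rfl
    · have hst : s + 1 + t = n + 1 := by omega
      have pascal : (negOneChoose (n + 1) t : K) =
          negOneChoose n t + (-1) ^ ((s + 1) * t) * negOneChoose n (s + 1) := by
        exact_mod_cast congrArg (Int.cast : ℤ → K) (negOneChoose_succ hst)
      calc S.mul (S.mul x (S.leftPow x (s + 1))) (S.leftPow x t)
          = S.mul x ((negOneChoose n t : K) • S.leftPow x (n + 1) +
              (-1 : K) ^ ((s + 1) * t) • (negOneChoose n (s + 1) : K) • S.leftPow x (n + 1)) := by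
            rw [mul_mul_of_mem_part x (leftPow_mem_part hx _) (leftPow_mem_part hx _),
              ih s.succ_pos ht hst, ih ht s.succ_pos ((add_comm _ _).trans hst)]
        _ = (negOneChoose (n + 1) t : K) • S.mul x (S.leftPow x (n + 1)) := by
            rw [smul_smul, ← add_smul, ← pascal, map_smul]

lemma mul_leftPow_odd_even (hx : x ∈ S.Z1) (k : ℕ) {l : ℕ} (hl : 1 ≤ l) :
    S.mul (S.leftPow x (2 * k + 1)) (S.leftPow x (2 * l)) =
      ((k + l).choose k : K) • S.leftPow x (2 * k + 2 * l + 1) := by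
  have half : (2 * k + 2 * l) / 2 = k + l := by omega
  rw [mul_leftPow hx (n := 2 * k + 2 * l) (by omega) (by omega) (by omega),
    negOneChoose_two_mul_right, half, Nat.choose_symm_add]

lemma mul_leftPow_even_even (hx : x ∈ S.Z1) {k l : ℕ} (hk : 1 ≤ k) (hl : 1 ≤ l) :
    S.mul (S.leftPow x (2 * k)) (S.leftPow x (2 * l)) =
      ((k + l - 1).choose l : K) • S.leftPow x (2 * k + 2 * l) := by
  have half : (2 * k + 2 * l - 1) / 2 = k + l - 1 := by omega
  have pred_succ : 2 * k + 2 * l - 1 + 1 = 2 * k + 2 * l := by omega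
  rw [mul_leftPow hx (n := 2 * k + 2 * l - 1) (by omega) (by omega) (by omega),
    negOneChoose_two_mul_right, half, pred_succ]

lemma mul_leftPow_odd_odd (hx : x ∈ S.Z1) (k l : ℕ) :
    S.mul (S.leftPow x (2 * k + 1)) (S.leftPow x (2 * l + 1)) =
      ((k + l).choose l : K) • S.leftPow x (2 * k + 2 * l + 2) := by
  rw [mul_leftPow hx (n := 2 * (k + l) + 1) (by omega) (by omega) (by omega),
    negOneChoose_odd_odd, mul_add]

lemma mul_leftPow_even_odd (hx : x ∈ S.Z1) {k : ℕ} (hk : 1 ≤ k) (l : ℕ) :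
    S.mul (S.leftPow x (2 * k)) (S.leftPow x (2 * l + 1)) = 0 := by
  rw [mul_leftPow hx (n := 2 * (k + l)) (by omega) (by omega) (by omega),
    negOneChoose_even_odd, Nat.cast_zero, zero_smul]

lemma mul_mem_span_leftPow (hx : x ∈ S.Z1) :
    ∀ u ∈ span K (Set.range (S.leftPow x)), ∀ v ∈ span K (Set.range (S.leftPow x)),
      S.mul u v ∈ span K (Set.range (S.leftPow x)) := by
  rw [← Submodule.map₂_le, Submodule.map₂_span_span, Submodule.span_le]
  rintro _ ⟨_, ⟨s, rfl⟩, _, ⟨t, rfl⟩, rfl⟩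
  change S.mul (S.leftPow x s) (S.leftPow x t) ∈ _
  rcases s.eq_zero_or_pos with rfl | hs
  · simp [leftPow]
  rcases t.eq_zero_or_pos with rfl | ht
  · simp [leftPow]
  obtain ⟨n, hn⟩ := Nat.exists_eq_succ_of_ne_zero (show s + t ≠ 0 by omega)
  rw [mul_leftPow hx hs ht hn]
  exact Submodule.smul_mem _ _ (Submodule.subset_span ⟨n + 1, rfl⟩)

lemma span_leftPow_eq_top {k : ℕ} (hnil : lcs S (k + 1) = ⊥) (hx : x ∈ S.Z1)
    (hgen : span K {x} ⊔ lcs S 2 = ⊤) : span K (Set.range (S.leftPow x)) = ⊤ := by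
  refine eq_top_of_sup_lcs_two_eq_top hnil (mul_mem_span_leftPow hx) ?_
  have hle : span K {x} ≤ span K (Set.range (S.leftPow x)) :=
    Submodule.span_mono (Set.singleton_subset_iff.2 ⟨1, rfl⟩)
  exact top_le_iff.1 (hgen.symm.trans_le (sup_le_sup_right hle _))

end LeftPower

section Generated

variable {S : ZinbielSuper K Z} {x : Z}

lemma codisjoint_span_leftPow (htop : span K (Set.range (S.leftPow x)) = ⊤) :
    Codisjoint (span K (S.leftPow x '' {t | Even t})) (span K (S.leftPow x '' {t | Odd t})) := by
  have univ_eq : {t : ℕ | Even t} ∪ {t | Odd t} = Set.univ :=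
    Set.eq_univ_of_forall Nat.even_or_odd
  rw [codisjoint_iff, ← Submodule.span_union, ← Set.image_union, univ_eq, Set.image_univ, htop]

lemma span_leftPow_even (hx : x ∈ S.Z1) (htop : span K (Set.range (S.leftPow x)) = ⊤) :
    span K (S.leftPow x '' {t | Even t}) = S.Z0 :=
  eq_left_of_isCompl_of_codisjoint S.compl
    (Submodule.span_le.2 <| Set.image_subset_iff.2 fun _ => leftPow_mem_Z0 hx)
    (Submodule.span_le.2 <| Set.image_subset_iff.2 fun _ => leftPow_mem_Z1 hx)
    (codisjoint_span_leftPow htop)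

lemma span_leftPow_odd (hx : x ∈ S.Z1) (htop : span K (Set.range (S.leftPow x)) = ⊤) :
    span K (S.leftPow x '' {t | Odd t}) = S.Z1 :=
  eq_left_of_isCompl_of_codisjoint S.compl.symm
    (Submodule.span_le.2 <| Set.image_subset_iff.2 fun _ => leftPow_mem_Z1 hx)
    (Submodule.span_le.2 <| Set.image_subset_iff.2 fun _ => leftPow_mem_Z0 hx)
    (codisjoint_span_leftPow htop).symm

lemma Z0_le_map_mul (hx : x ∈ S.Z1) (htop : span K (Set.range (S.leftPow x)) = ⊤) :
    S.Z0 ≤ S.Z1.map (S.mul x) := by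
  rw [← span_leftPow_even hx htop, Submodule.span_le]
  rintro _ ⟨t, ht, rfl⟩
  match t, ht with
  | 0, _ => exact zero_mem _
  | 1, ht => exact (Nat.not_even_one ht).elim
  | t + 2, ht => exact Submodule.mem_map_of_mem (leftPow_mem_Z1 hx (by grind))

lemma Z1_le_span_sup_map_mul (hx : x ∈ S.Z1) (htop : span K (Set.range (S.leftPow x)) = ⊤) :
    S.Z1 ≤ span K {x} ⊔ S.Z0.map (S.mul x) := by
  rw [← span_leftPow_odd hx htop, Submodule.span_le]
  rintro _ ⟨t, ht, rfl⟩
  match t, ht with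
  | 0, _ => exact zero_mem _
  | 1, _ => exact Submodule.mem_sup_left (Submodule.mem_span_singleton_self x)
  | t + 2, ht =>
    exact Submodule.mem_sup_right (Submodule.mem_map_of_mem (leftPow_mem_Z0 hx (by grind)))

lemma finrank_Z1_eq_or [FiniteDimensional K Z] (hx : x ∈ S.Z1)
    (htop : span K (Set.range (S.leftPow x)) = ⊤) :
    finrank K S.Z1 = finrank K S.Z0 ∨ finrank K S.Z1 = finrank K S.Z0 + 1 := by
  have lower : finrank K S.Z0 ≤ finrank K S.Z1 :=
    (Submodule.finrank_mono (Z0_le_map_mul hx htop)).trans (Submodule.finrank_map_le _ _)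
  have upper : finrank K S.Z1 ≤ 1 + finrank K S.Z0 :=
    calc finrank K S.Z1
        ≤ finrank K ↥(span K {x} ⊔ S.Z0.map (S.mul x)) :=
          Submodule.finrank_mono (Z1_le_span_sup_map_mul hx htop)
      _ ≤ finrank K (span K {x}) + finrank K (S.Z0.map (S.mul x)) :=
          Submodule.finrank_add_le_finrank_add_finrank _ _
      _ ≤ 1 + finrank K S.Z0 :=
          add_le_add (by simpa using finrank_span_le_card (R := K) ({x} : Set Z))
            (Submodule.finrank_map_le _ _)
  omega

lemma exists_basis_tB_eq_leftPow {n : ℕ} (hn : finrank K Z = n)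
    (hnil : lcs S (n + 1) = ⊥) (htop : span K (Set.range (S.leftPow x)) = ⊤) :
    ∃ b : Basis (Fin n) K Z, ∀ t, tB b t = S.leftPow x t := by
  have hle : ⊤ ≤ span K (Set.range fun i : Fin n => S.leftPow x (i + 1)) := by
    rw [← htop, Submodule.span_le]
    rintro _ ⟨t, rfl⟩
    rcases t with _ | t
    · exact zero_mem _
    · rcases lt_or_ge t n with h | h
      · exact Submodule.subset_span ⟨⟨t, h⟩, rfl⟩
      · rw [leftPow_eq_zero_of_lt hnil (Nat.lt_succ_of_le h)]
        exact zero_mem _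
  refine ⟨basisOfTopLeSpanOfCardEqFinrank _ hle (by rw [Fintype.card_fin, hn]), fun t => ?_⟩
  rcases t with _ | t
  · rfl
  · rcases lt_or_ge t n with h | h
    · exact (tB_succ _ ⟨t, h⟩).trans
        (congrFun (coe_basisOfTopLeSpanOfCardEqFinrank _ _ _) (⟨t, h⟩ : Fin n))
    · rw [tB_of_lt _ (Nat.lt_succ_of_le h), leftPow_eq_zero_of_lt hnil (Nat.lt_succ_of_le h)]

variable {Z' : Type*} [AddCommGroup Z'] [Module K Z'] {S' : ZinbielSuper K Z'} {x' : Z'}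
  {φ : Z →ₗ[K] Z'}

lemma map_mul_of_map_leftPow (hx : x ∈ S.Z1) (hx' : x' ∈ S'.Z1)
    (htop : span K (Set.range (S.leftPow x)) = ⊤)
    (hφ : ∀ t, φ (S.leftPow x t) = S'.leftPow x' t) (u v : Z) :
    φ (S.mul u v) = S'.mul (φ u) (φ v) := by
  suffices h : S.mul.compr₂ φ = S'.mul.compl₁₂ φ φ from LinearMap.congr_fun₂ h u v
  refine LinearMap.ext_on_range htop fun s => LinearMap.ext_on_range htop fun t => ?_
  rw [LinearMap.compr₂_apply, LinearMap.compl₁₂_apply, hφ, hφ]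
  rcases s.eq_zero_or_pos with rfl | hs
  · simp [leftPow]
  rcases t.eq_zero_or_pos with rfl | ht
  · simp [leftPow]
  obtain ⟨n, hn⟩ := Nat.exists_eq_succ_of_ne_zero (show s + t ≠ 0 by omega)
  rw [mul_leftPow hx hs ht hn, mul_leftPow hx' hs ht hn, map_smul, hφ]

lemma map_Z0_of_map_leftPow (hx : x ∈ S.Z1) (hx' : x' ∈ S'.Z1)
    (htop : span K (Set.range (S.leftPow x)) = ⊤)
    (htop' : span K (Set.range (S'.leftPow x')) = ⊤)
    (hφ : ∀ t, φ (S.leftPow x t) = S'.leftPow x' t) : S.Z0.map φ = S'.Z0 := by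
  simp only [← span_leftPow_even hx htop, ← span_leftPow_even hx' htop', Submodule.map_span,
    Set.image_image, hφ]

lemma map_Z1_of_map_leftPow (hx : x ∈ S.Z1) (hx' : x' ∈ S'.Z1)
    (htop : span K (Set.range (S.leftPow x)) = ⊤)
    (htop' : span K (Set.range (S'.leftPow x')) = ⊤)
    (hφ : ∀ t, φ (S.leftPow x t) = S'.leftPow x' t) : S.Z1.map φ = S'.Z1 := by
  simp only [← span_leftPow_odd hx htop, ← span_leftPow_odd hx' htop', Submodule.map_span,
    Set.image_image, hφ]

end Generated

section NullFiliform

variable {S : ZinbielSuper K Z} [FiniteDimensional K Z]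

lemma lcs_eq_bot_of_nullFiliform (hnf : NullFiliform S) : lcs S (finrank K Z + 1) = ⊥ := by
  refine Submodule.finrank_eq_zero.1 ?_
  rw [hnf _ (Nat.le_add_left 1 _) le_rfl, Nat.sub_self]

lemma span_singleton_sup_lcs_two (hnf : NullFiliform S) {x : Z} (hx : x ∉ lcs S 2) :
    span K {x} ⊔ lcs S 2 = ⊤ := by
  have : Nontrivial Z := ⟨x, 0, fun h => hx (h ▸ zero_mem _)⟩
  have hpos : 0 < finrank K Z := finrank_pos
  have codim : finrank K (lcs S 2) = finrank K Z + 1 - 2 := hnf 2 one_le_two (by omega)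
  have hlt := Submodule.finrank_lt_finrank_of_lt (Submodule.covBy_span_singleton_sup hx).lt
  have hle := Submodule.finrank_le (span K {x} ⊔ lcs S 2)
  exact Submodule.eq_top_of_finrank_eq (by omega)

lemma exists_odd_span_leftPow_eq_top (hnf : NullFiliform S) (h1 : S.Z1 ≠ ⊥) :
    ∃ x ∈ S.Z1, span K (Set.range (S.leftPow x)) = ⊤ := by
  have hnil := lcs_eq_bot_of_nullFiliform hnf
  obtain ⟨x, hx, hx2⟩ := SetLike.not_le_iff_exists.1 (not_Z1_le_lcs_two hnil h1)
  exact ⟨x, hx, span_leftPow_eq_top hnil hx (span_singleton_sup_lcs_two hnf hx2)⟩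

theorem exists_linearEquiv_of_finrank_eq {Z' : Type*} [AddCommGroup Z'] [Module K Z']
    [FiniteDimensional K Z'] {S' : ZinbielSuper K Z'} (hnf : NullFiliform S) (h1 : S.Z1 ≠ ⊥)
    (hnf' : NullFiliform S') (h1' : S'.Z1 ≠ ⊥) (hdim : finrank K Z' = finrank K Z) :
    ∃ φ : Z ≃ₗ[K] Z', S.Z0.map (φ : Z →ₗ[K] Z') = S'.Z0 ∧ S.Z1.map (φ : Z →ₗ[K] Z') = S'.Z1 ∧
      ∀ u v : Z, φ (S.mul u v) = S'.mul (φ u) (φ v) := by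
  obtain ⟨x, hx, htop⟩ := exists_odd_span_leftPow_eq_top hnf h1
  obtain ⟨x', hx', htop'⟩ := exists_odd_span_leftPow_eq_top hnf' h1'
  obtain ⟨b, hb⟩ := exists_basis_tB_eq_leftPow rfl (lcs_eq_bot_of_nullFiliform hnf) htop
  obtain ⟨b', hb'⟩ :=
    exists_basis_tB_eq_leftPow hdim (hdim ▸ lcs_eq_bot_of_nullFiliform hnf') htop'
  let φ : Z ≃ₗ[K] Z' := b.equiv b' (Equiv.refl _)
  have hφ (t : ℕ) : (φ : Z →ₗ[K] Z') (S.leftPow x t) = S'.leftPow x' t := by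
    rw [← hb, ← hb']
    exact map_tB (fun i => b.equiv_apply i b' (Equiv.refl _)) t
  exact ⟨φ, map_Z0_of_map_leftPow hx hx' htop htop' hφ, map_Z1_of_map_leftPow hx hx' htop htop' hφ,
    map_mul_of_map_leftPow hx hx' htop hφ⟩

end NullFiliform

end ZinbielSuper

open ZinbielSuper in
theorem nullFiliform_classification_general
    {K : Type*} [Field K] {Z : Type u} [AddCommGroup Z] [Module K Z] [FiniteDimensional K Z]
    (S : ZinbielSuper K Z) (hnf : NullFiliform S) (h1 : S.Z1 ≠ ⊥) :
    (finrank K S.Z1 = finrank K S.Z0 ∨ finrank K S.Z1 = finrank K S.Z0 + 1) ∧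
    (∃ b : Basis (Fin (finrank K Z)) K Z,
      (∀ t : ℕ, Odd t → tB b t ∈ S.Z1) ∧
      (∀ t : ℕ, Even t → tB b t ∈ S.Z0) ∧
      (∀ k l : ℕ, 1 ≤ l →
        S.mul (tB b (2 * k + 1)) (tB b (2 * l)) =
          ((k + l).choose k : K) • tB b (2 * k + 2 * l + 1)) ∧
      (∀ k l : ℕ, 1 ≤ k → 1 ≤ l →
        S.mul (tB b (2 * k)) (tB b (2 * l)) =
          ((k + l - 1).choose l : K) • tB b (2 * k + 2 * l)) ∧
      (∀ k l : ℕ,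
        S.mul (tB b (2 * k + 1)) (tB b (2 * l + 1)) =
          ((k + l).choose l : K) • tB b (2 * k + 2 * l + 2)) ∧
      (∀ k l : ℕ, 1 ≤ k →
        S.mul (tB b (2 * k)) (tB b (2 * l + 1)) = 0)) ∧
    (∀ (Z' : Type v) [AddCommGroup Z'] [Module K Z'] [FiniteDimensional K Z']
        (S' : ZinbielSuper K Z'),
      NullFiliform S' → S'.Z1 ≠ ⊥ →
      finrank K S'.Z0 = finrank K S.Z0 → finrank K S'.Z1 = finrank K S.Z1 →
      ∃ φ : Z ≃ₗ[K] Z',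
        S.Z0.map (φ : Z →ₗ[K] Z') = S'.Z0 ∧
        S.Z1.map (φ : Z →ₗ[K] Z') = S'.Z1 ∧
        ∀ x y : Z, φ (S.mul x y) = S'.mul (φ x) (φ y)) := by
  obtain ⟨x, hx, htop⟩ := exists_odd_span_leftPow_eq_top hnf h1
  obtain ⟨b, hb⟩ := exists_basis_tB_eq_leftPow rfl (lcs_eq_bot_of_nullFiliform hnf) htop
  refine ⟨finrank_Z1_eq_or hx htop, ⟨b, ?_⟩, fun Z' _ _ _ S' hnf' h1' e0 e1 => ?_⟩
  · simp only [hb]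
    exact ⟨fun _ => leftPow_mem_Z1 hx, fun _ => leftPow_mem_Z0 hx,
      fun k _ => mul_leftPow_odd_even hx k, fun _ _ => mul_leftPow_even_even hx,
      mul_leftPow_odd_odd hx, fun _ l hk => mul_leftPow_even_odd hx hk l⟩
  · have hdim : finrank K Z' = finrank K Z := by
      rw [← Submodule.finrank_add_eq_of_isCompl S.compl,
        ← Submodule.finrank_add_eq_of_isCompl S'.compl, e0, e1]
    exact exists_linearEquiv_of_finrank_eq hnf h1 hnf' h1' hdim

/-- An `n`-dimensional null-filiform Zinbiel superalgebra over `ℂ` with nonzero odd part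
satisfies `dim Z₁ = dim Z₀` or `dim Z₁ = dim Z₀ + 1`, has a homogeneous basis
`e₁, …, e_n` (odd for odd index, even for even index) whose multiplication is
`e_{2k+1}·e_{2l} = C(k+l, k) e_{2k+2l+1}`, `e_{2k}·e_{2l} = C(k+l−1, l) e_{2k+2l}` (`k,l ≥ 1`),
`e_{2k+1}·e_{2l+1} = C(k+l, l) e_{2k+2l+2}`, `e_{2k}·e_{2l+1} = 0` (with `e_t = 0` for `t > n`);
in particular it is unique up to isomorphism for each pair `(dim Z₀, dim Z₁)`. -/
theorem nullFiliform_classification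
    {Z : Type u} [AddCommGroup Z] [Module ℂ Z] [FiniteDimensional ℂ Z]
    (S : ZinbielSuper ℂ Z) (hnf : NullFiliform S) (h1 : S.Z1 ≠ ⊥) :
    (finrank ℂ S.Z1 = finrank ℂ S.Z0 ∨ finrank ℂ S.Z1 = finrank ℂ S.Z0 + 1) ∧
    (∃ b : Basis (Fin (finrank ℂ Z)) ℂ Z,
      (∀ t : ℕ, Odd t → tB b t ∈ S.Z1) ∧
      (∀ t : ℕ, Even t → tB b t ∈ S.Z0) ∧
      (∀ k l : ℕ, 1 ≤ l →
        S.mul (tB b (2 * k + 1)) (tB b (2 * l)) =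
          ((k + l).choose k : ℂ) • tB b (2 * k + 2 * l + 1)) ∧
      (∀ k l : ℕ, 1 ≤ k → 1 ≤ l →
        S.mul (tB b (2 * k)) (tB b (2 * l)) =
          ((k + l - 1).choose l : ℂ) • tB b (2 * k + 2 * l)) ∧
      (∀ k l : ℕ,
        S.mul (tB b (2 * k + 1)) (tB b (2 * l + 1)) =
          ((k + l).choose l : ℂ) • tB b (2 * k + 2 * l + 2)) ∧
      (∀ k l : ℕ, 1 ≤ k →
        S.mul (tB b (2 * k)) (tB b (2 * l + 1)) = 0)) ∧
    (∀ (Z' : Type v) [AddCommGroup Z'] [Module ℂ Z'] [FiniteDimensional ℂ Z']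
        (S' : ZinbielSuper ℂ Z'),
      NullFiliform S' → S'.Z1 ≠ ⊥ →
      finrank ℂ S'.Z0 = finrank ℂ S.Z0 → finrank ℂ S'.Z1 = finrank ℂ S.Z1 →
      ∃ φ : Z ≃ₗ[ℂ] Z',
        S.Z0.map (φ : Z →ₗ[ℂ] Z') = S'.Z0 ∧
        S.Z1.map (φ : Z →ₗ[ℂ] Z') = S'.Z1 ∧
        ∀ x y : Z, φ (S.mul x y) = S'.mul (φ x) (φ y)) :=
  nullFiliform_classification_general S hnf h1
end

section
/- Let Z₀ be a Zinbiel algebra over a field K, i.e. a K-vector space with bilinear multiplication satisfying (x·y)·z = x·(y·z + z·y), and let c ∈ Z₀ satisfy c·Z₀ = 0. Define Z = Z₀ ⊕ K·f₁ with multiplication extending that of Z₀ by x·f₁ = f₁·x = 0 for all x ∈ Z₀, and f₁·f₁ = c. Then Z, with even part Z₀ and odd part K·f₁, is a Zinbiel superalgebra. -/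
open Module Submodule

variable {K : Type*} [Field K] {Z : Type*} [AddCommGroup Z] [Module K Z]

/-!
Every product lies in the even part `A`, and `c` annihilates `A` from the left, so `(p·q)·r` depends
only on the components of `p, q, r` in `A`. In `p·(q·r ± r·q)` the components along `f₁` enter only
through `f₁·f₁ = c`. This contribution vanishes when `q` or `r` is even, and when both are odd the
sign of the super identity cancels it.
-/

section Product

variable {R A V : Type*} [CommRing R] [AddCommGroup A] [Module R A] [AddCommGroup V] [Module R V]

/-- The identity making `μ` the product of a (purely even) Zinbiel algebra. -/
def IsZinbiel (μ : A →ₗ[R] A →ₗ[R] A) : Prop :=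
  ∀ x y z : A, μ (μ x y) z = μ x (μ y z + μ z y)

/-- The product on `A ⊕ V` which is `μ` on `A` and `β` on `V`, with `A·V = V·A = 0`. For `V = K·f₁`
and `β f₁ f₁ = c` it is the one-dimensional odd extension of `A` by `c`. -/
def oddExtensionMul (μ : A →ₗ[R] A →ₗ[R] A) (β : V →ₗ[R] V →ₗ[R] A) :
    (A × V) →ₗ[R] (A × V) →ₗ[R] A × V :=
  (μ.compl₁₂ (.fst R A V) (.fst R A V) + β.compl₁₂ (.snd R A V) (.snd R A V)).compr₂ (.inl R A V)

variable {μ : A →ₗ[R] A →ₗ[R] A} {β : V →ₗ[R] V →ₗ[R] A}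

theorem oddExtensionMul_apply (p q : A × V) :
    oddExtensionMul μ β p q = (μ p.1 q.1 + β p.2 q.2, 0) :=
  rfl

theorem oddExtensionMul_mem_range_inl (p q : A × V) :
    oddExtensionMul μ β p q ∈ LinearMap.range (LinearMap.inl R A V) :=
  ⟨μ p.1 q.1 + β p.2 q.2, rfl⟩

theorem oddExtensionMul_inl_inr (x : A) (w : V) :
    oddExtensionMul μ β (LinearMap.inl R A V x) (LinearMap.inr R A V w) = 0 := by
  simp [oddExtensionMul_apply]

theorem oddExtensionMul_inr_inl (v : V) (y : A) :
    oddExtensionMul μ β (LinearMap.inr R A V v) (LinearMap.inl R A V y) = 0 := by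
  simp [oddExtensionMul_apply]

theorem oddExtensionMul_oddExtensionMul (hμ : IsZinbiel μ) (hβ : ∀ v w x, μ (β v w) x = 0)
    (p q r : A × V) :
    oddExtensionMul μ β (oddExtensionMul μ β p q) r = (μ p.1 (μ q.1 r.1 + μ r.1 q.1), 0) := by
  simp only [oddExtensionMul_apply, map_add, LinearMap.add_apply, hβ, hμ p.1, map_zero,
    LinearMap.zero_apply, add_zero]

theorem oddExtensionMul_zinbiel_of_even (hμ : IsZinbiel μ) (hβ : ∀ v w x, μ (β v w) x = 0)
    (p : A × V) {q r : A × V}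
    (hqr : q ∈ LinearMap.range (LinearMap.inl R A V) ∨ r ∈ LinearMap.range (LinearMap.inl R A V)) :
    oddExtensionMul μ β (oddExtensionMul μ β p q) r =
      oddExtensionMul μ β p (oddExtensionMul μ β q r + oddExtensionMul μ β r q) := by
  rw [oddExtensionMul_oddExtensionMul hμ hβ]
  rcases hqr with ⟨y, rfl⟩ | ⟨z, rfl⟩ <;> simp [oddExtensionMul_apply]

theorem oddExtensionMul_zinbiel_of_odd (hμ : IsZinbiel μ) (hβ : ∀ v w x, μ (β v w) x = 0)
    (hsymm : ∀ x v w, μ x (β v w) = μ x (β w v)) (p : A × V) {q r : A × V}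
    (hq : q ∈ LinearMap.range (LinearMap.inr R A V))
    (hr : r ∈ LinearMap.range (LinearMap.inr R A V)) :
    oddExtensionMul μ β (oddExtensionMul μ β p q) r =
      oddExtensionMul μ β p (oddExtensionMul μ β q r - oddExtensionMul μ β r q) := by
  obtain ⟨v, rfl⟩ := hq
  obtain ⟨w, rfl⟩ := hr
  rw [oddExtensionMul_oddExtensionMul hμ hβ]
  simp [oddExtensionMul_apply, hsymm p.1 v w]

end Product

section Superalgebra

variable {A V : Type*} [AddCommGroup A] [Module K A] [AddCommGroup V] [Module K V]

/-- The Zinbiel superalgebra with even part `A`, odd part `V` and product `oddExtensionMul μ β`.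
Symmetry of `β` is imposed only up to the right annihilator of `A`. -/
def ZinbielSuper.oddExtension (μ : A →ₗ[K] A →ₗ[K] A) (β : V →ₗ[K] V →ₗ[K] A)
    (hμ : IsZinbiel μ) (hβ : ∀ v w x, μ (β v w) x = 0)
    (hsymm : ∀ x v w, μ x (β v w) = μ x (β w v)) : ZinbielSuper K (A × V) where
  mul := oddExtensionMul μ β
  Z0 := LinearMap.range (LinearMap.inl K A V)
  Z1 := LinearMap.range (LinearMap.inr K A V)
  compl := LinearMap.isCompl_range_inl_inr
  mul00 p _ q _ := oddExtensionMul_mem_range_inl p q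
  mul01 := by
    rintro _ ⟨x, rfl⟩ _ ⟨w, rfl⟩
    rw [oddExtensionMul_inl_inr]
    exact zero_mem _
  mul10 := by
    rintro _ ⟨v, rfl⟩ _ ⟨y, rfl⟩
    rw [oddExtensionMul_inr_inl]
    exact zero_mem _
  mul11 p _ q _ := oddExtensionMul_mem_range_inl p q
  zinb_even p _ _ _ _ _ hqr := oddExtensionMul_zinbiel_of_even hμ hβ p hqr
  zinb_odd p _ _ _ hq hr := oddExtensionMul_zinbiel_of_odd hμ hβ hsymm p hq hr

theorem zinbiel_oneDim_odd_extension_general (μ : A →ₗ[K] A →ₗ[K] A) (β : V →ₗ[K] V →ₗ[K] A)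
    (hμ : IsZinbiel μ) (hβ : ∀ v w x, μ (β v w) x = 0)
    (hsymm : ∀ x v w, μ x (β v w) = μ x (β w v)) :
    ∃ S : ZinbielSuper K (A × V),
      S.Z0 = LinearMap.range (LinearMap.inl K A V) ∧
      S.Z1 = LinearMap.range (LinearMap.inr K A V) ∧
      ∀ (x y : A) (v w : V), S.mul (x, v) (y, w) = (μ x y + β v w, 0) :=
  ⟨.oddExtension μ β hμ hβ hsymm, rfl, rfl, fun _ _ _ _ => rfl⟩

end Superalgebra

/-- Given a Zinbiel algebra `A` and `c ∈ A` with `c·A = 0`, the space `Z = A ⊕ K·f₁` with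
`x·f₁ = f₁·x = 0` for `x ∈ A` and `f₁·f₁ = c`, with even part `A` and odd part `K·f₁`,
is a Zinbiel superalgebra. -/
theorem zinbiel_oneDim_odd_extension (K : Type*) [Field K] (A : Type*) [AddCommGroup A]
    [Module K A] (mulA : A →ₗ[K] A →ₗ[K] A)
    (hzinb : ∀ x y z : A, mulA (mulA x y) z = mulA x (mulA y z + mulA z y))
    (c : A) (hc : ∀ x : A, mulA c x = 0) :
    ∃ S : ZinbielSuper K (A × K),
      S.Z0 = LinearMap.range (LinearMap.inl K A K) ∧
      S.Z1 = LinearMap.range (LinearMap.inr K A K) ∧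
      ∀ (x y : A) (s t : K),
        S.mul (x, s) (y, t) = (mulA x y + (s * t) • c, 0) :=
  zinbiel_oneDim_odd_extension_general mulA
    ((LinearMap.mul K K).compr₂ (LinearMap.toSpanSingleton K A c)) hzinb
    (fun s t x => by simp [hc]) (fun x s t => by simp [mul_comm])
end

section
/- Every Zinbiel superalgebra Z = Z₀ ⊕ Z₁ over a field with finite dimension n > 1 has a proper graded ideal: there exists an ideal I of Z with I ≠ 0, I ≠ Z, and I = (I ∩ Z₀) ⊕ (I ∩ Z₁). -/
open Module Submodule

variable {K : Type*} [Field K] {Z : Type*} [AddCommGroup Z] [Module K Z]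

/-- `I` is a (two-sided) ideal of the Zinbiel superalgebra: `Z·I ⊆ I` and `I·Z ⊆ I`. -/
def IsIdeal (S : ZinbielSuper K Z) (I : Submodule K Z) : Prop :=
  ∀ x : Z, ∀ a ∈ I, S.mul x a ∈ I ∧ S.mul a x ∈ I

/-- `I` is a right ideal of the Zinbiel superalgebra: `I·Z ⊆ I`. -/
def IsRightIdeal (S : ZinbielSuper K Z) (I : Submodule K Z) : Prop :=
  ∀ a ∈ I, ∀ x : Z, S.mul a x ∈ I

/-- `I` is a minimal ideal: it is a nonzero ideal and the only ideals contained in it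
are `0` and itself. -/
def IsMinimalIdeal (S : ZinbielSuper K Z) (I : Submodule K Z) : Prop :=
  IsIdeal S I ∧ I ≠ ⊥ ∧ ∀ J : Submodule K Z, IsIdeal S J → J ≤ I → J = ⊥ ∨ J = I

/-- `I` is a minimal right ideal: it is a nonzero right ideal and the only right ideals
contained in it are `0` and itself. -/
def IsMinimalRightIdeal (S : ZinbielSuper K Z) (I : Submodule K Z) : Prop :=
  IsRightIdeal S I ∧ I ≠ ⊥ ∧ ∀ J : Submodule K Z, IsRightIdeal S J → J ≤ I → J = ⊥ ∨ J = I

/-! Write `R_y` for right multiplication by `y`. For even `y, z` the Zinbiel identity reads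
`R_z R_y = R_{yz + zy}`, so the `R_y` with `y` even form a commutative algebra of operators. For odd
`b`, `(cd)b` equals `(cb)d` if `d` is even and `c(db - bd)` if `d` is odd; thus `(Z·Z)·Z₁ ⊆ Z·Z₀`.
If `Z·Z = Z`, it follows that `Z·Z₀ = Z`, and the determinant trick gives an even right identity
`e`. But then `e = (ee)e = e(ee + ee) = 2e`, so `e = 0` and `Z = Z·e = 0`. Hence `Z·Z ≠ Z` is a
graded ideal; when it vanishes, the line through any homogeneous vector is an ideal. -/

open scoped IsMulCommutative in
theorem one_mem_of_iSup_range_eq_top {R M : Type*} [CommRing R] [AddCommGroup M] [Module R M]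
    [Module.Finite R M] (T : NonUnitalSubalgebra R (Module.End R M)) [IsMulCommutative T]
    (hT : ⨆ f : T, LinearMap.range (f : Module.End R M) = ⊤) : 1 ∈ T := by
  -- The augmentation ideal of the unitization acts on `M` through `T`.
  let φ := NonUnitalSubalgebra.unitization T
  let I : Ideal (Unitization R T) := RingHom.ker (Unitization.fstHom R T)
  let : Module (Unitization R T) M := Module.compHom M φ.toRingHom
  have smul_eq (r : Unitization R T) (x : M) : r • x = φ r x := rfl
  have : IsScalarTower R (Unitization R T) M := ⟨fun c r x ↦ by
    rw [smul_eq, smul_eq, map_smul, LinearMap.smul_apply]⟩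
  have : Module.Finite (Unitization R T) M := .of_restrictScalars_finite R _ M
  have hI : (⊤ : Submodule (Unitization R T) M) ≤ I • ⊤ := by
    suffices h : ⨆ f : T, LinearMap.range (f : Module.End R M) ≤
        (I • (⊤ : Submodule (Unitization R T) M)).restrictScalars R from
      fun x _ ↦ h (hT ▸ mem_top)
    refine iSup_le fun f ↦ ?_
    rintro _ ⟨x, rfl⟩
    have hf : (f : Unitization R T) ∈ I := Unitization.fst_inr R f
    simpa [smul_eq, φ] using! smul_mem_smul hf (mem_top (x := x))
  obtain ⟨r, hr, hr_smul⟩ :=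
    exists_mem_and_smul_eq_self_of_fg_of_le_smul I ⊤ Module.Finite.fg_top hI
  have hr_fst : r.fst = 0 := hr
  have hr_one : (r.snd : Module.End R M) = 1 := by
    ext x
    simpa [smul_eq, φ, hr_fst] using hr_smul x mem_top
  exact hr_one ▸ r.snd.2

namespace ZinbielSuper

/-- A subspace is graded if it is the sum of its even and odd parts; the sum is automatically
direct, as `Z₀ ⊓ Z₁ = ⊥`. -/
def IsGraded (S : ZinbielSuper K Z) (I : Submodule K Z) : Prop :=
  I = (I ⊓ S.Z0) ⊔ (I ⊓ S.Z1)

variable {S : ZinbielSuper K Z} {I J : Submodule K Z}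

theorem isGraded_iff_le : S.IsGraded I ↔ I ≤ (I ⊓ S.Z0) ⊔ (I ⊓ S.Z1) :=
  ⟨le_of_eq, fun h ↦ h.antisymm (sup_le inf_le_left inf_le_left)⟩

theorem isGraded_of_le_Z0 (h : I ≤ S.Z0) : S.IsGraded I :=
  isGraded_iff_le.2 <| le_sup_of_le_left (le_inf le_rfl h)

theorem isGraded_of_le_Z1 (h : I ≤ S.Z1) : S.IsGraded I :=
  isGraded_iff_le.2 <| le_sup_of_le_right (le_inf le_rfl h)

theorem IsGraded.sup (hI : S.IsGraded I) (hJ : S.IsGraded J) : S.IsGraded (I ⊔ J) := by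
  refine isGraded_iff_le.2 (sup_le (hI.le.trans ?_) (hJ.le.trans ?_))
  · gcongr <;> exact le_sup_left
  · gcongr <;> exact le_sup_right

theorem isGraded_top : S.IsGraded ⊤ := by
  simpa only [S.compl.sup_eq_top] using
    (isGraded_of_le_Z0 le_rfl).sup (isGraded_of_le_Z1 (S := S) le_rfl)

theorem IsGraded.map₂_mul (hI : S.IsGraded I) (hJ : S.IsGraded J) :
    S.IsGraded (map₂ S.mul I J) := by
  rw [hI, hJ]
  simp only [map₂_sup_left, map₂_sup_right]
  refine .sup (.sup ?_ ?_) (.sup ?_ ?_)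
  · exact isGraded_of_le_Z0 <| map₂_le.2 fun x hx y hy ↦ S.mul00 x hx.2 y hy.2
  · exact isGraded_of_le_Z1 <| map₂_le.2 fun x hx y hy ↦ S.mul10 x hx.2 y hy.2
  · exact isGraded_of_le_Z1 <| map₂_le.2 fun x hx y hy ↦ S.mul01 x hx.2 y hy.2
  · exact isGraded_of_le_Z0 <| map₂_le.2 fun x hx y hy ↦ S.mul11 x hx.2 y hy.2

theorem isIdeal_map₂_mul_top (S : ZinbielSuper K Z) : IsIdeal S (map₂ S.mul ⊤ ⊤) :=
  fun _ _ _ ↦ ⟨apply_mem_map₂ _ mem_top mem_top, apply_mem_map₂ _ mem_top mem_top⟩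

theorem isIdeal_of_map₂_mul_top_eq_bot (h : map₂ S.mul ⊤ ⊤ = ⊥) (I : Submodule K Z) :
    IsIdeal S I := by
  have mul_eq_zero (x y : Z) : S.mul x y = 0 :=
    (mem_bot K).1 (h ▸ apply_mem_map₂ S.mul mem_top mem_top)
  exact fun x a _ ↦ by simp only [mul_eq_zero, zero_mem, and_self]

theorem exists_isGraded_span_singleton [Nontrivial Z] (S : ZinbielSuper K Z) :
    ∃ x ≠ 0, S.IsGraded (K ∙ x) := by
  by_cases h : S.Z0 = ⊥
  · have hZ1 : S.Z1 ≠ ⊥ := fun h1 ↦ bot_ne_top (α := Submodule K Z) <| by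
      simpa [h, h1] using S.compl.sup_eq_top
    obtain ⟨x, hx, hx0⟩ := exists_mem_ne_zero_of_ne_bot hZ1
    exact ⟨x, hx0, isGraded_of_le_Z1 ((span_singleton_le_iff_mem x _).2 hx)⟩
  · obtain ⟨x, hx, hx0⟩ := exists_mem_ne_zero_of_ne_bot h
    exact ⟨x, hx0, isGraded_of_le_Z0 ((span_singleton_le_iff_mem x _).2 hx)⟩

variable (S)

theorem exists_even_add_odd_eq (x : Z) : ∃ a ∈ S.Z0, ∃ b ∈ S.Z1, a + b = x :=
  mem_sup.1 (S.compl.sup_eq_top ▸ mem_top)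

theorem mul_mul_of_even (x : Z) {y z : Z} (hy : y ∈ S.Z0 ∨ y ∈ S.Z1) (hz : z ∈ S.Z0 ∨ z ∈ S.Z1)
    (hyz : y ∈ S.Z0 ∨ z ∈ S.Z0) : S.mul (S.mul x y) z = S.mul x (S.mul y z + S.mul z y) := by
  obtain ⟨a, ha, b, hb, rfl⟩ := S.exists_even_add_odd_eq x
  rw [map_add, LinearMap.add_apply, LinearMap.add_apply, map_add, LinearMap.add_apply,
    S.zinb_even a y z (.inl ha) hy hz hyz, S.zinb_even b y z (.inr hb) hy hz hyz]

theorem mul_mul_of_odd (x : Z) {y z : Z} (hy : y ∈ S.Z1) (hz : z ∈ S.Z1) :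
    S.mul (S.mul x y) z = S.mul x (S.mul y z - S.mul z y) := by
  obtain ⟨a, ha, b, hb, rfl⟩ := S.exists_even_add_odd_eq x
  rw [map_add, LinearMap.add_apply, LinearMap.add_apply, map_add, LinearMap.add_apply,
    S.zinb_odd a y z (.inl ha) hy hz, S.zinb_odd b y z (.inr hb) hy hz]

theorem mul_right_comm_of_even (x : Z) {y z : Z} (hy : y ∈ S.Z0 ∨ y ∈ S.Z1) (hz : z ∈ S.Z0) :
    S.mul (S.mul x y) z = S.mul (S.mul x z) y := by
  rw [S.mul_mul_of_even x hy (.inl hz) (.inr hz), S.mul_mul_of_even x (.inl hz) hy (.inl hz),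
    add_comm]

theorem map₂_mul_map₂_mul_Z1_le :
    map₂ S.mul (map₂ S.mul ⊤ ⊤) S.Z1 ≤ map₂ S.mul ⊤ S.Z0 := by
  refine map₂_le.2 fun w hw b hb ↦ ?_
  suffices h : map₂ S.mul ⊤ ⊤ ≤ (map₂ S.mul ⊤ S.Z0).comap (S.mul.flip b) from h hw
  rw [← S.compl.sup_eq_top, map₂_sup_right, S.compl.sup_eq_top]
  refine sup_le (map₂_le.2 fun c _ d hd ↦ ?_) (map₂_le.2 fun c _ d hd ↦ ?_)
  · rw [mem_comap, LinearMap.flip_apply, ← S.mul_right_comm_of_even c (.inr hb) hd]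
    exact apply_mem_map₂ _ mem_top hd
  · rw [mem_comap, LinearMap.flip_apply, S.mul_mul_of_odd c hd hb]
    exact apply_mem_map₂ _ mem_top (sub_mem (S.mul11 d hd b hb) (S.mul11 b hb d hd))

theorem map₂_mul_top_Z0_eq_top (h : map₂ S.mul ⊤ ⊤ = ⊤) : map₂ S.mul ⊤ S.Z0 = ⊤ := by
  have hZ1 : map₂ S.mul ⊤ S.Z1 ≤ map₂ S.mul ⊤ S.Z0 := by
    simpa only [h] using S.map₂_mul_map₂_mul_Z1_le
  calc
    map₂ S.mul ⊤ S.Z0 = map₂ S.mul ⊤ S.Z0 ⊔ map₂ S.mul ⊤ S.Z1 := (sup_eq_left.2 hZ1).symm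
    _ = ⊤ := by rw [← map₂_sup_right, S.compl.sup_eq_top, h]

theorem flip_mul_flip_of_even {y z : Z} (hy : y ∈ S.Z0) (hz : z ∈ S.Z0) :
    (S.mul.flip z * S.mul.flip y : Module.End K Z) = S.mul.flip (S.mul y z + S.mul z y) :=
  LinearMap.ext fun x ↦ S.mul_mul_of_even x (.inl hy) (.inl hz) (.inl hy)

/-- The non-unital algebra of right multiplications `x ↦ x·y` by even elements `y`, to which the
determinant trick is applied. -/
def evenRightMul : NonUnitalSubalgebra K (Module.End K Z) where
  __ := S.Z0.map S.mul.flip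
  mul_mem' := by
    rintro _ _ ⟨z, hz, rfl⟩ ⟨y, hy, rfl⟩
    rw [S.flip_mul_flip_of_even hy hz]
    exact mem_map_of_mem (add_mem (S.mul00 y hy z hz) (S.mul00 z hz y hy))

instance : IsMulCommutative S.evenRightMul where
  is_comm.comm := by
    rintro ⟨_, z, hz, rfl⟩ ⟨_, y, hy, rfl⟩
    refine Subtype.ext ?_
    change (S.mul.flip z * S.mul.flip y : Module.End K Z) = S.mul.flip y * S.mul.flip z
    rw [S.flip_mul_flip_of_even hy hz, S.flip_mul_flip_of_even hz hy, add_comm]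

theorem exists_even_right_identity [FiniteDimensional K Z] (h : map₂ S.mul ⊤ S.Z0 = ⊤) :
    ∃ e ∈ S.Z0, ∀ x, S.mul x e = x := by
  have hT : ⨆ f : S.evenRightMul, LinearMap.range (f : Module.End K Z) = ⊤ :=
    top_unique <| h.ge.trans <| map₂_le.2 fun x _ y hy ↦
      mem_iSup_of_mem ⟨S.mul.flip y, mem_map_of_mem hy⟩ ⟨x, rfl⟩
  obtain ⟨e, he, he_one⟩ := one_mem_of_iSup_range_eq_top S.evenRightMul hT
  exact ⟨e, he, fun x ↦ LinearMap.congr_fun he_one x⟩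

theorem eq_zero_of_even_of_mul_self_eq {e : Z} (he : e ∈ S.Z0) (h : S.mul e e = e) : e = 0 := by
  have h_two : e = e + e := by
    simpa only [map_add, h] using S.mul_mul_of_even e (.inl he) (.inl he) (.inl he)
  exact left_eq_add.1 h_two

theorem map₂_mul_top_ne_top [FiniteDimensional K Z] [Nontrivial Z] : map₂ S.mul ⊤ ⊤ ≠ ⊤ := by
  intro h
  obtain ⟨e, he, mul_e⟩ := S.exists_even_right_identity (S.map₂_mul_top_Z0_eq_top h)
  obtain ⟨x, hx⟩ := exists_ne (0 : Z)
  rw [← mul_e x, S.eq_zero_of_even_of_mul_self_eq he (mul_e e), map_zero] at hx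
  exact hx rfl

end ZinbielSuper

/-- Every Zinbiel superalgebra of finite dimension `> 1` has a proper graded ideal. -/
theorem exists_proper_graded_ideal (K : Type*) [Field K] (Z : Type*) [AddCommGroup Z]
    [Module K Z] [FiniteDimensional K Z] (S : ZinbielSuper K Z)
    (hdim : 1 < finrank K Z) :
    ∃ I : Submodule K Z, IsIdeal S I ∧ I ≠ ⊥ ∧ I ≠ ⊤ ∧
      I = (I ⊓ S.Z0) ⊔ (I ⊓ S.Z1) := by
  have : Nontrivial Z := Module.nontrivial_of_finrank_pos (zero_lt_one.trans hdim)
  by_cases h : map₂ S.mul ⊤ ⊤ = ⊥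
  · obtain ⟨x, hx, hx_graded⟩ := S.exists_isGraded_span_singleton
    have hx_top : K ∙ x ≠ ⊤ := fun h_top ↦ hdim.ne' <| by
      rw [← finrank_top, ← h_top, finrank_span_singleton hx]
    exact ⟨K ∙ x, ZinbielSuper.isIdeal_of_map₂_mul_top_eq_bot h _,
      mt span_singleton_eq_bot.1 hx, hx_top, hx_graded⟩
  · exact ⟨map₂ S.mul ⊤ ⊤, S.isIdeal_map₂_mul_top, h, S.map₂_mul_top_ne_top,
      ZinbielSuper.isGraded_top.map₂_mul ZinbielSuper.isGraded_top⟩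
end
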